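/- For all integers d ≥ 0 and k ≥ 0 with 2k ≤ 5(d+1), one has ((−1)^{d+1}/2)·∑_{q ≥ 1} [ C(8+5d−2k, 5q−(k+1)) − 4·C(6+5d−2k, 5q−(k+2)) ] = F_{5(d+1)−2k}, where F_m denotes the m-th Fibonacci number (F₀ = 0, F₁ = F₂ = 1) and the sum over positive integers q has only finitely many nonzero terms. -/

import Mathlib

/-!
Put `m = 5(d+1) - 2k`. Since the omitted terms `q ≤ 0` vanish, the two series are complete
residue-class sums `G n b = ∑_{j ≡ b mod 5} C(n, j)`, with `n = m + 3` and `n = m + 1`, and in both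
the residue is the *central* one, `b ≡ n / 2 ≡ 3n (mod 5)`. Pascal's rule and the symmetry about
the central residue turn `(a, b, c) = (G n (3n), G n (3n+1), G n (3n+2))` into `(2c, b+c, a+b)`
when `n` increases by one, so that the differences `(b - a, c - b)` become
`(-(c - b), -((b - a) + (c - b)))`: a Fibonacci recursion with alternating signs
(`residueSum_central`). Two Pascal steps give `a_{m+3} = 2 (a_{m+1} + b_{m+1})`, so the bracket is
`2 (b_{m+1} - a_{m+1}) = 2 (-1)^m F_m`, and `m ≡ d + 1 (mod 2)`.
-/

/-- Binomial coefficient with integer arguments, with the convention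
`C a b = 0` unless `0 ≤ b ≤ a`. -/
noncomputable def binomR (a b : ℤ) : ℝ :=
  if 0 ≤ b ∧ b ≤ a then ((a.toNat.choose b.toNat : ℕ) : ℝ) else 0

lemma binomR_pascal (n : ℕ) (b : ℤ) :
    binomR ((n : ℤ) + 1) b = binomR n b + binomR n (b - 1) := by
  rcases lt_or_ge b 0 with hb | hb
  · simp [binomR, show ¬ 0 ≤ b by omega, show ¬ 1 ≤ b by omega]
  lift b to ℕ using hb
  rcases b with _ | j
  · simp [binomR, show (0 : ℤ) ≤ (n : ℤ) + 1 by omega]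
  -- Within natural indices the upper bound `b ≤ a` is already built into `Nat.choose`.
  have key : ∀ a c : ℕ, binomR (a : ℤ) (c : ℤ) = (a.choose c : ℝ) := by
    intro a c
    unfold binomR
    split_ifs with h
    · simp
    · rw [Nat.choose_eq_zero_of_lt (by omega)]; simp
  have h1 := key (n + 1) (j + 1)
  have h2 := key n j
  have h3 := key n (j + 1)
  push_cast at h1 h3 ⊢
  rw [add_sub_cancel_right, h1, h2, h3, Nat.choose_succ_succ]
  push_cast
  ring

/-- The sum of the binomial coefficients `C(n, j)` over all integers `j ≡ b (mod 5)`. -/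
noncomputable def residueSum (n b : ℤ) : ℝ := ∑' q : ℤ, binomR n (5 * q + b)

lemma summable_binomR (n b : ℤ) : Summable fun q : ℤ => binomR n (5 * q + b) := by
  apply summable_of_ne_finset_zero (s := Finset.Icc (-|b|) (|n| + |b|))
  intro q hq
  rw [binomR, if_neg]
  rintro ⟨h1, h2⟩
  apply hq
  rw [Finset.mem_Icc]
  have := neg_abs_le b
  have := le_abs_self b
  have := le_abs_self n
  have := abs_nonneg n
  omega

lemma residueSum_pascal (n : ℕ) (b : ℤ) :
    residueSum ((n : ℤ) + 1) b = residueSum n b + residueSum n (b - 1) := by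
  unfold residueSum
  rw [← (summable_binomR _ _).tsum_add (summable_binomR _ _)]
  congr 1
  funext q
  rw [binomR_pascal, add_sub_assoc]

lemma residueSum_periodic (n b c t : ℤ) (h : c = b + 5 * t) :
    residueSum n c = residueSum n b := by
  unfold residueSum
  rw [← (Equiv.addRight t).tsum_eq (fun q : ℤ => binomR n (5 * q + b))]
  congr 1
  funext q
  simp only [Equiv.coe_addRight]
  congr 1
  rw [h]; ring

lemma residueSum_zero_zero : residueSum 0 0 = 1 := by
  unfold residueSum
  rw [tsum_eq_single 0]
  · simp [binomR]
  · intro q hq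
    rw [binomR, if_neg]
    omega

lemma residueSum_zero (b : ℤ) (h : ¬ 5 ∣ b) : residueSum 0 b = 0 := by
  unfold residueSum
  refine (tsum_congr fun q => ?_).trans tsum_zero
  rw [binomR, if_neg]
  omega

/-- Symmetry about the central residue `3 (n + 1)`, and the consecutive differences of the
residue sums next to it. The index starts at `1` because the differences at index `0` would be
`F₋₁` and `F₀`, up to sign. -/
lemma residueSum_central (n : ℕ) :
    let g : ℤ → ℝ := fun i => residueSum ((n : ℤ) + 1) (3 * n + 3 + i)
    g 4 = g 1 ∧ g 3 = g 2 ∧ g 1 - g 0 = (-1) ^ n * Nat.fib n ∧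
      g 2 - g 1 = (-1) ^ n * Nat.fib (n + 1) := by
  induction n with
  | zero =>
    have p := residueSum_pascal 0
    simp only [Nat.cast_zero] at p
    have h5 : residueSum 0 5 = 1 := by
      rw [residueSum_periodic 0 0 5 1 (by norm_num), residueSum_zero_zero]
    have h2 := residueSum_zero 2 (by norm_num)
    have h3 := residueSum_zero 3 (by norm_num)
    have h4 := residueSum_zero 4 (by norm_num)
    have h6 := residueSum_zero 6 (by norm_num)
    have h7 := residueSum_zero 7 (by norm_num)
    simp only [Nat.cast_zero, p]
    norm_num [h2, h3, h4, h5, h6, h7]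
  | succ n ih =>
    obtain ⟨i1, i2, i3, i4⟩ := ih
    have p := residueSum_pascal (n + 1)
    push_cast at p ⊢
    simp only [p]
    -- Reduce every residue to one of the five representatives `3n + 3 + i`, `0 ≤ i ≤ 4`.
    have e (i : ℤ) : residueSum ((n : ℤ) + 1) (3 * n + 3 + (i + 5))
        = residueSum ((n : ℤ) + 1) (3 * n + 3 + i) :=
      residueSum_periodic _ _ _ 1 (by ring)
    have e0 := e 0
    have e1 := e 1
    have e2 := e 2
    norm_num at e0 e1 e2
    have s (i j : ℤ) (h : j = i + 3) : 3 * ((n : ℤ) + 1) + 3 + i = 3 * n + 3 + j := by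
      rw [h]; ring
    have s' (i j : ℤ) (h : j = i + 2) : 3 * ((n : ℤ) + 1) + 3 + i - 1 = 3 * n + 3 + j := by
      rw [h]; ring
    rw [s' 4 6 rfl, s' 1 3 rfl, s' 3 5 rfl, s' 2 4 rfl, s' 0 2 rfl,
      s 4 7 rfl, s 1 4 rfl, s 3 6 rfl, s 2 5 rfl, s 0 3 rfl, e0, e1, e2, Nat.fib_add_two]
    norm_num at i1 i2 i3 i4 ⊢
    rw [pow_succ]
    refine ⟨?_, ?_, ?_, ?_⟩ <;> linarith

/-- Terms with `q ≤ 0` have negative lower index, so a series over `q ≥ 1` is a full residue sum. -/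
lemma hasSum_residueSum (n c : ℤ) (hc : 0 < c) :
    HasSum (fun q : ℕ => binomR n (5 * ((q : ℤ) + 1) - c)) (residueSum n (-c)) := by
  have hinj : Function.Injective (fun q : ℕ => (q : ℤ) + 1) := by
    intro x y h
    simpa using h
  have h : HasSum (fun q : ℤ => binomR n (5 * q + -c)) (residueSum n (-c)) :=
    (summable_binomR n (-c)).hasSum
  simp only [sub_eq_add_neg]
  refine (hinj.hasSum_iff (f := fun q : ℤ => binomR n (5 * q + -c)) ?_).mpr h
  intro x hx
  rw [binomR, if_neg]
  rintro ⟨h, -⟩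
  exact hx ⟨(x - 1).toNat, by dsimp only; omega⟩

/-- The two-point intersection numbers `⟨x₁^{6+5d−2k} x₂^k⟩` on `Hol_d(CP¹ → G₂(C⁵))`
are the alternate Fibonacci numbers `F_{5(d+1)−2k}`. -/
theorem two_point_fibonacci (d k : ℕ) (hk : 2 * k ≤ 5 * (d + 1)) :
    ((-1 : ℝ) ^ (d + 1) / 2) * ∑' q : ℕ,
        (binomR (8 + 5 * (d : ℤ) - 2 * (k : ℤ)) (5 * ((q : ℤ) + 1) - ((k : ℤ) + 1))
          - 4 * binomR (6 + 5 * (d : ℤ) - 2 * (k : ℤ)) (5 * ((q : ℤ) + 1) - ((k : ℤ) + 2)))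
      = (Nat.fib (5 * (d + 1) - 2 * k) : ℝ) := by
  obtain ⟨m, hm⟩ := Nat.exists_eq_add_of_le hk
  rw [hm, Nat.add_sub_cancel_left]
  have hmz : 5 * ((d : ℤ) + 1) = 2 * k + m := by exact_mod_cast hm
  rw [((hasSum_residueSum _ _ (by omega)).sub
    ((hasSum_residueSum _ _ (by omega)).mul_left 4)).tsum_eq]
  rw [show 8 + 5 * (d : ℤ) - 2 * k = m + 1 + 1 + 1 by linarith,
    show 6 + 5 * (d : ℤ) - 2 * k = m + 1 by linarith]
  -- Both residues are central: `-(k+1) ≡ 3(m+3)` and `-(k+2) ≡ 3(m+1)` modulo `5`.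
  rw [← residueSum_periodic _ (-((k : ℤ) + 1)) (3 * m + 9) (3 * d + 5 - k) (by linarith),
    ← residueSum_periodic _ (-((k : ℤ) + 2)) (3 * m + 3) (3 * d + 4 - k) (by linarith)]
  have p1 := residueSum_pascal (m + 1)
  have p2 := residueSum_pascal (m + 1 + 1)
  push_cast at p1 p2
  rw [p2, p1, p1, residueSum_periodic _ (3 * m + 3 + 1) (3 * m + 9) 1 (by ring),
    residueSum_periodic _ (3 * m + 3 + 0) (3 * m + 9 - 1) 1 (by ring),
    show 3 * (m : ℤ) + 9 - 1 - 1 = 3 * m + 3 + 4 by ring]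
  obtain ⟨h1, -, h3, -⟩ := residueSum_central m
  dsimp only at h1 h3
  rw [h1]
  rw [add_zero] at h3 ⊢
  have hsign : (-1 : ℝ) ^ (d + 1) * (-1) ^ m = 1 := by
    rw [← pow_add]
    exact Even.neg_one_pow (by rw [Nat.even_iff]; omega)
  linear_combination (-1 : ℝ) ^ (d + 1) * h3 + (Nat.fib m : ℝ) * hsign
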